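/- Let p > 3 be a prime. (i) If p ≡ 1 (mod 4), then ∑_{0<n<p/3} χ_p(n) = (√(3p)/(2π))·L(1, χ_{3p}). (ii) If p ≡ 3 (mod 4), then ∑_{0<n<p/3} χ_p(n) = (√p/(2π))·(3 - χ_p(3))·L(1, χ̃_p). (Each sum runs over all integers n with 0 < n < p/3; identities in ℂ after casting the integer left-hand sides.) -/

import Mathlib

/-!
Write `e(x) = exp(2πix)`. The value at `s = 1` of the odd series `∑ (e(kx) - e(-kx)) k⁻ˢ` is the
sawtooth `2πi(1/2 - x)`: continuing a Mellin transform gives `∑ e(kx)/k = -log(1 - e(x))`.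
For a primitive character `χ` modulo `N`, the Gauss sum expresses `χ⁻¹(k)` through the `e(ak/N)`.
If `χ` is odd, this evaluates `L(1, χ⁻¹)` as a multiple of `∑ a χ(a)`, and reindexing by `a ↦ 3a`
turns that into the sum of `χ` over the first third of a period. If `χ` is even, the sawtooth is
shifted by `1/3`: averaging `e(k(a/N + 1/3)) - e(-k(a/N + 1/3))` against `χ(a)` gives a multiple of
`χ₃(k) χ⁻¹(k)`, while `∑ χ(a) (1/2 - {a/N + 1/3})` only sees where `a/N + 1/3` wraps around.

Both formulas carry the Gauss sum of `χ` as a factor. For the Legendre symbol its sign follows from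
the Landsberg–Schaar reciprocity law for quadratic Gauss sums, obtained by comparing the growth of
Jacobi's `θ` at the cusps `2q/N` and `-N/(2q)`, which `τ ↦ -1/τ` exchanges.
-/

open Complex Filter Topology
open scoped Real

/-! ### Theta functions and quadratic Gauss sums -/

lemma ofReal_mul_cpow_half {r : ℝ} (hr : 0 < r) {z : ℂ} (hz : z ≠ 0) :
    (r * z) ^ (1 / 2 : ℂ) = √r * z ^ (1 / 2 : ℂ) := by
  have hr' : (r : ℂ) ≠ 0 := ofReal_ne_zero.2 hr.ne'
  rw [Real.sqrt_eq_rpow, ofReal_cpow hr.le, cpow_def_of_ne_zero (mul_ne_zero hr' hz),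
    cpow_def_of_ne_zero hr', cpow_def_of_ne_zero hz, log_ofReal_mul hr hz, ← Complex.exp_add,
    ofReal_log hr.le]
  push_cast
  ring_nf

lemma tendsto_jacobiTheta₂_ofReal_nhds_one {α : Type*} {l : Filter α} {τ : α → ℂ}
    (hτ : Tendsto (fun a ↦ (τ a).im) l atTop) (x : ℝ) :
    Tendsto (fun a ↦ jacobiTheta₂ x (τ a)) l (𝓝 1) := by
  have bound_summable := summable_pow_mul_jacobiTheta₂_term_bound 0 one_pos 0
  have term_le : ∀ᶠ a in l, ∀ n : ℤ, ‖jacobiTheta₂_term n x (τ a)‖ ≤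
      (|n| ^ 0 : ℝ) * Real.exp (-π * (1 * n ^ 2 - 2 * 0 * |n|)) := by
    filter_upwards [hτ.eventually_ge_atTop 1] with a ha n
    simpa only [pow_zero, one_mul] using norm_jacobiTheta₂_term_le one_pos (by simp) ha n
  have term_tendsto (n : ℤ) :
      Tendsto (fun a ↦ jacobiTheta₂_term n x (τ a)) l (𝓝 (if n = 0 then 1 else 0)) := by
    split_ifs with hn
    · simp [hn, jacobiTheta₂_term, tendsto_const_nhds]
    · rw [tendsto_zero_iff_norm_tendsto_zero]
      simp only [norm_jacobiTheta₂_term, ofReal_im, mul_zero, sub_zero]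
      have hn2 : -π * (n : ℝ) ^ 2 < 0 :=
        mul_neg_of_neg_of_pos (neg_lt_zero.2 Real.pi_pos) (by positivity)
      exact Real.tendsto_exp_atBot.comp (hτ.const_mul_atTop_of_neg hn2)
  simpa only [jacobiTheta₂, tsum_ite_eq] using
    tendsto_tsum_of_dominated_convergence bound_summable term_tendsto term_le

lemma tsum_int_eq_sum_zmod_tsum {E : Type*} [AddCommGroup E] [UniformSpace E]
    [IsUniformAddGroup E] [CompleteSpace E] [T0Space E] {f : ℤ → E} (hf : Summable f)
    (N : ℕ) [NeZero N] : ∑' n, f n = ∑ r : ZMod N, ∑' m : ℤ, f (m * N + r.val) := by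
  obtain ⟨k, rfl⟩ := Nat.exists_eq_succ_of_ne_zero (NeZero.ne N)
  let e : ZMod (k + 1) × ℤ ≃ ℤ := (Equiv.prodComm _ _).trans (Int.divModEquiv (k + 1)).symm
  rw [← e.tsum_eq f]
  exact (Summable.tsum_prod (e.summable_iff.2 hf)).trans (tsum_fintype _)

lemma jacobiTheta₂_term_mul_add (N : ℕ) (m r : ℤ) (σ : ℂ) :
    jacobiTheta₂_term (m * N + r) 0 σ =
      cexp (π * I * r ^ 2 * σ) * jacobiTheta₂_term m (N * r * σ) (N ^ 2 * σ) := by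
  simp only [jacobiTheta₂_term, ← Complex.exp_add]
  push_cast
  ring_nf

lemma exp_mul_jacobiTheta₂_natCast_mul {N : ℕ} (hN : N ≠ 0) (r : ℕ) {σ : ℂ} (hσ : σ ≠ 0) :
    cexp (π * I * r ^ 2 * σ) * jacobiTheta₂ (N * r * σ) (N ^ 2 * σ) =
      1 / (N * (-I * σ) ^ (1 / 2 : ℂ)) *
        jacobiTheta₂ ((r / N : ℝ) : ℂ) (-1 / (N ^ 2 * σ)) := by
  have hN0 : (N : ℂ) ≠ 0 := Nat.cast_ne_zero.2 hN
  have sqrt_eq : (-I * (N ^ 2 * σ)) ^ (1 / 2 : ℂ) = N * (-I * σ) ^ (1 / 2 : ℂ) := by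
    rw [show -I * (N ^ 2 * σ) = ((N ^ 2 : ℝ) : ℂ) * (-I * σ) by push_cast; ring,
      ofReal_mul_cpow_half (by positivity) (by simp [hσ]), Real.sqrt_sq N.cast_nonneg,
      ofReal_natCast]
  have exp_eq : cexp (π * I * r ^ 2 * σ) * cexp (-π * I * (N * r * σ) ^ 2 / (N ^ 2 * σ)) = 1 := by
    rw [← Complex.exp_add, Complex.exp_eq_one_iff]
    exact ⟨0, by field_simp; simp⟩
  rw [jacobiTheta₂_functional_equation, sqrt_eq]
  have : N * r * σ / (N ^ 2 * σ) = ((r / N : ℝ) : ℂ) := by push_cast; field_simp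
  rw [this]
  linear_combination (1 / (N * (-I * σ) ^ (1 / 2 : ℂ)) *
        jacobiTheta₂ ((r / N : ℝ) : ℂ) (-1 / (N ^ 2 * σ))) * exp_eq

/-- Splitting the theta series of a periodic function into residue classes and applying Poisson
summation to each of them. -/
lemma tsum_mul_jacobiTheta₂_term {N : ℕ} [NeZero N] (f : ZMod N → ℂ) {σ : ℂ} (hσ : 0 < σ.im) :
    ∑' n : ℤ, f n * jacobiTheta₂_term n 0 σ =
      1 / (N * (-I * σ) ^ (1 / 2 : ℂ)) *
        ∑ r : ZMod N, f r * jacobiTheta₂ ((r.val / N : ℝ) : ℂ) (-1 / (N ^ 2 * σ)) := by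
  have summable_term : Summable fun n : ℤ ↦ f n * jacobiTheta₂_term n 0 σ := by
    obtain ⟨C, hC⟩ := (Set.finite_range fun r ↦ ‖f r‖).bddAbove
    refine Summable.of_norm_bounded
      (((summable_jacobiTheta₂_term_iff 0 σ).2 hσ).norm.mul_left C) fun n ↦ ?_
    rw [norm_mul]
    gcongr
    exact hC ⟨_, rfl⟩
  rw [tsum_int_eq_sum_zmod_tsum summable_term N, Finset.mul_sum]
  refine Finset.sum_congr rfl fun r _ ↦ ?_
  have hσ0 : σ ≠ 0 := by rintro rfl; simp at hσ
  calc ∑' m : ℤ, f (m * N + r.val : ℤ) * jacobiTheta₂_term (m * N + r.val) 0 σ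
      = ∑' m : ℤ, f r * cexp (π * I * r.val ^ 2 * σ) *
          jacobiTheta₂_term m (N * r.val * σ) (N ^ 2 * σ) := by
        refine tsum_congr fun m ↦ ?_
        rw [jacobiTheta₂_term_mul_add]
        simp [mul_assoc]
    _ = f r * (cexp (π * I * r.val ^ 2 * σ) * jacobiTheta₂ (N * r.val * σ) (N ^ 2 * σ)) := by
        rw [tsum_mul_left, mul_assoc, jacobiTheta₂]
    _ = _ := by
        rw [exp_mul_jacobiTheta₂_natCast_mul (NeZero.ne N) _ hσ0]
        ring

/-- The quadratic Gauss sum `G(c, N) = ∑ e(c x² / N)`, over `x` modulo `N`. -/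
noncomputable def quadraticGaussSum (c : ℤ) (N : ℕ) [NeZero N] : ℂ :=
  ∑ x : ZMod N, ZMod.stdAddChar ((c : ZMod N) * x ^ 2)

lemma jacobiTheta_two_mul_div_add {N : ℕ} [NeZero N] (c : ℤ) (σ : ℂ) :
    jacobiTheta (2 * c / N + σ) =
      ∑' n : ℤ, ZMod.stdAddChar ((c : ZMod N) * (n : ZMod N) ^ 2) * jacobiTheta₂_term n 0 σ := by
  rw [jacobiTheta_eq_jacobiTheta₂, jacobiTheta₂]
  refine tsum_congr fun n ↦ ?_
  have : (c : ZMod N) * (n : ZMod N) ^ 2 = ((c * n ^ 2 : ℤ) : ZMod N) := by push_cast; rfl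
  rw [this, ZMod.stdAddChar_coe, jacobiTheta₂_term, jacobiTheta₂_term, ← Complex.exp_add]
  congr 1
  push_cast
  ring

lemma im_pos_of_im_neg_one_div_pos {σ : ℂ} (hσ : 0 < (-1 / σ).im) : 0 < σ.im := by
  have im_eq : (-1 / σ).im = σ.im / normSq σ := by simp [neg_div, inv_im]
  rw [im_eq] at hσ
  exact (div_pos_iff_of_pos_right <| (normSq_nonneg σ).lt_of_ne' fun h ↦ by simp [h] at hσ).1 hσ

lemma tendsto_sqrt_mul_jacobiTheta {α : Type*} {l : Filter α} {σ : α → ℂ} (N : ℕ) [NeZero N]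
    (c : ℤ) (hσ : Tendsto (fun a ↦ (-1 / σ a).im) l atTop) :
    Tendsto (fun a ↦ (-I * σ a) ^ (1 / 2 : ℂ) * jacobiTheta (2 * c / N + σ a)) l
      (𝓝 (quadraticGaussSum c N / N)) := by
  have hN : (0 : ℝ) < N ^ 2 := by
    have := Nat.pos_of_neZero N
    positivity
  have im_tendsto : Tendsto (fun a ↦ (-1 / (N ^ 2 * σ a)).im) l atTop := by
    refine (hσ.const_mul_atTop (inv_pos.2 hN)).congr fun a ↦ ?_
    rw [← im_ofReal_mul]
    congr 1
    push_cast
    field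
  have sum_tendsto : Tendsto (fun a ↦ ∑ r : ZMod N, ZMod.stdAddChar ((c : ZMod N) * r ^ 2) *
      jacobiTheta₂ ((r.val / N : ℝ) : ℂ) (-1 / (N ^ 2 * σ a))) l (𝓝 (quadraticGaussSum c N)) := by
    simpa only [mul_one] using! tendsto_finsetSum _ fun r _ ↦
      (tendsto_jacobiTheta₂_ofReal_nhds_one im_tendsto _).const_mul
        (ZMod.stdAddChar ((c : ZMod N) * r ^ 2))
  refine (sum_tendsto.div_const (N : ℂ)).congr' ?_
  filter_upwards [hσ.eventually_gt_atTop 0] with a ha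
  replace ha := im_pos_of_im_neg_one_div_pos ha
  have hσ0 : (-I * σ a) ^ (1 / 2 : ℂ) ≠ 0 := by
    have : σ a ≠ 0 := fun h ↦ by simp [h] at ha
    simp [cpow_eq_zero_iff, this]
  rw [jacobiTheta_two_mul_div_add,
    tsum_mul_jacobiTheta₂_term (fun r ↦ ZMod.stdAddChar ((c : ZMod N) * r ^ 2)) ha]
  field

lemma one_add_I_ne_zero : (1 + I : ℂ) ≠ 0 := fun h ↦ by
  simpa using congrArg re h

lemma neg_I_cpow_half : (-I) ^ (1 / 2 : ℂ) = √2 / (1 + I) := by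
  rw [cpow_def_of_ne_zero (neg_ne_zero.2 I_ne_zero), log_neg_I,
    show -(π / 2) * I * (1 / 2 : ℂ) = (-(π / 4) : ℝ) * I by push_cast; ring, exp_mul_I,
    ← ofReal_cos, ← ofReal_sin, Real.cos_neg, Real.sin_neg, Real.cos_pi_div_four,
    Real.sin_pi_div_four, eq_div_iff one_add_I_ne_zero]
  push_cast
  linear_combination -(√2 : ℂ) / 2 * I_sq

lemma jacobiTheta_neg_one_div {τ : ℂ} (hτ : 0 < τ.im) :
    jacobiTheta (-1 / τ) = (-I * τ) ^ (1 / 2 : ℂ) * jacobiTheta τ := by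
  have hτ0 : τ ≠ 0 := by rintro rfl; simp at hτ
  have sqrt_ne : (-I * τ) ^ (1 / 2 : ℂ) ≠ 0 := by simp [cpow_eq_zero_iff, hτ0]
  rw [jacobiTheta_eq_jacobiTheta₂, jacobiTheta_eq_jacobiTheta₂,
    jacobiTheta₂_functional_equation 0 τ, zero_div, ← mul_assoc, ← mul_assoc,
    mul_one_div_cancel sqrt_ne]
  simp

section LandsbergSchaar

variable (q N : ℕ) [NeZero N]

lemma tendsto_jacobiTheta_add_mul_I :
    Tendsto (fun t : ℝ ↦ (√t : ℂ) * jacobiTheta (2 * q / N + t * I)) (𝓝[>] 0)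
      (𝓝 (quadraticGaussSum q N / N)) := by
  have im_eq (t : ℝ) : (-1 / (t * I)).im = t⁻¹ := by
    rw [show -1 / (t * I) = ((t⁻¹ : ℝ) : ℂ) * I by simp [div_eq_mul_inv, mul_comm]]
    simp
  have im_tendsto : Tendsto (fun t : ℝ ↦ (-1 / (t * I)).im) (𝓝[>] 0) atTop := by
    simpa only [im_eq] using tendsto_inv_nhdsGT_zero
  refine (tendsto_sqrt_mul_jacobiTheta N q im_tendsto).congr' ?_
  filter_upwards [self_mem_nhdsWithin] with t ht
  rw [show -I * (t * I) = (t : ℂ) by linear_combination -(t : ℂ) * I_sq,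
    Real.sqrt_eq_rpow, ofReal_cpow (le_of_lt ht)]
  push_cast
  rfl

lemma tendsto_im_neg_one_div_right_zero {r : ℝ} (hr : 0 < r) :
    Tendsto (fun t : ℝ ↦ (-1 / (t * I / (r * (r + t * I))) : ℂ).im) (𝓝[>] 0) atTop := by
  refine (tendsto_inv_nhdsGT_zero.const_mul_atTop (sq_pos_of_pos hr)).congr' ?_
  filter_upwards [self_mem_nhdsWithin] with t ht
  have ht0 : (t : ℂ) ≠ 0 := ofReal_ne_zero.2 ht.ne'
  have hr0 : (r : ℂ) ≠ 0 := ofReal_ne_zero.2 hr.ne'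
  have neg_one_div_eq : (-1 / (t * I / (r * (r + t * I))) : ℂ) =
      ((-r : ℝ) : ℂ) + ((r ^ 2 * t⁻¹ : ℝ) : ℂ) * I := by
    push_cast
    field_simp
    linear_combination -r * I_sq
  rw [neg_one_div_eq, add_im, ofReal_im, im_ofReal_mul, I_im, mul_one, zero_add]

/-- With `r = 2q/N` and `τ = r + it`, the point `-1/τ` tends to `-1/r = 2(-N)/(4q)`. -/
lemma tendsto_jacobiTheta_neg_one_div_add_mul_I [NeZero q] :
    Tendsto (fun t : ℝ ↦ (√t : ℂ) * (2 * q / N + t * I : ℂ)⁻¹ ^ (1 / 2 : ℂ) *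
        jacobiTheta (-1 / (2 * q / N + t * I))) (𝓝[>] 0)
      (𝓝 (√(2 * q / N) * (quadraticGaussSum (-N) (4 * q) / (4 * q)))) := by
  have hq : (0 : ℝ) < q := Nat.cast_pos.2 (Nat.pos_of_neZero q)
  have hN : (0 : ℝ) < N := Nat.cast_pos.2 (Nat.pos_of_neZero N)
  obtain ⟨r, hr⟩ : ∃ r : ℝ, r = 2 * q / N := ⟨_, rfl⟩
  have r_pos : 0 < r := hr ▸ by positivity
  have hr0 : (r : ℂ) ≠ 0 := ofReal_ne_zero.2 r_pos.ne'
  have hrC : (2 * q / N : ℂ) = r := by rw [hr]; push_cast; rfl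
  have cusp_eq : (2 * (-N : ℤ) / (4 * q : ℕ) : ℂ) = -1 / r := by
    rw [← hrC]; push_cast; field
  let σ (t : ℝ) : ℂ := t * I / (r * (r + t * I))
  rw [← hr]
  convert ((tendsto_sqrt_mul_jacobiTheta (4 * q) (-N)
    (tendsto_im_neg_one_div_right_zero r_pos)).const_mul (√r : ℂ)).congr' ?_ using 1
  · push_cast; rfl
  filter_upwards [self_mem_nhdsWithin] with t ht
  have hτ : (r + t * I : ℂ) ≠ 0 := fun h ↦ by simpa [r_pos.ne'] using congrArg re h
  have neg_I_mul_σ : -I * σ t = ((t / r : ℝ) : ℂ) * (r + t * I : ℂ)⁻¹ := by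
    simp only [σ, ← div_div]
    push_cast
    linear_combination -(t / r * (r + t * I : ℂ)⁻¹) * I_sq
  have add_σ : -1 / r + σ t = -1 / (r + t * I) := by
    simp only [σ]
    field_simp
    ring
  rw [hrC, cusp_eq, neg_I_mul_σ, add_σ, ofReal_mul_cpow_half (div_pos ht r_pos) (inv_ne_zero hτ),
    ← mul_assoc, ← mul_assoc, ← ofReal_mul, ← Real.sqrt_mul r_pos.le, mul_div_cancel₀ _ r_pos.ne']

lemma tendsto_inv_cpow_half_mul_neg_I_mul_cpow_half {r : ℝ} (hr : 0 < r) {α : Type*}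
    {l : Filter α} {τ : α → ℂ} (hτ : Tendsto τ l (𝓝 r)) :
    Tendsto (fun a ↦ (τ a)⁻¹ ^ (1 / 2 : ℂ) * (-I * τ a) ^ (1 / 2 : ℂ)) l
      (𝓝 (√2 / (1 + I))) := by
  have inv_tendsto : Tendsto (fun a ↦ (τ a)⁻¹ ^ (1 / 2 : ℂ)) l (𝓝 ((r⁻¹ * 1) ^ (1 / 2 : ℂ))) := by
    refine (continuousAt_cpow_const ?_).tendsto.comp <| by
      simpa using hτ.inv₀ (ofReal_ne_zero.2 hr.ne')
    rw [mul_one]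
    exact ofReal_mem_slitPlane.2 (inv_pos.2 hr)
  have sqrt_tendsto :
      Tendsto (fun a ↦ (-I * τ a) ^ (1 / 2 : ℂ)) l (𝓝 ((r * -I) ^ (1 / 2 : ℂ))) := by
    refine (continuousAt_cpow_const ?_).tendsto.comp <| by
      simpa only [mul_comm] using hτ.mul_const (-I)
    simp [mem_slitPlane_iff, hr.ne']
  convert inv_tendsto.mul sqrt_tendsto using 2
  rw [ofReal_mul_cpow_half (inv_pos.2 hr) one_ne_zero,
    ofReal_mul_cpow_half hr (neg_ne_zero.2 I_ne_zero), neg_I_cpow_half, one_cpow, mul_one,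
    ← mul_assoc, ← ofReal_mul, ← Real.sqrt_mul (inv_pos.2 hr).le, inv_mul_cancel₀ hr.ne']
  simp

/-- The Landsberg–Schaar reciprocity law: both sides are the leading coefficient of `θ` at the
cusp `2q/N`, on the right after the transformation `τ ↦ -1/τ`. -/
theorem quadraticGaussSum_reciprocity [NeZero q] :
    4 * √q * quadraticGaussSum q N = √N * (1 + I) * quadraticGaussSum (-N) (4 * q) := by
  have hq : (0 : ℝ) < q := Nat.cast_pos.2 (Nat.pos_of_neZero q)
  have hN : (0 : ℝ) < N := Nat.cast_pos.2 (Nat.pos_of_neZero N)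
  let τ (t : ℝ) : ℂ := 2 * q / N + t * I
  have τ_tendsto : Tendsto τ (𝓝[>] 0) (𝓝 ((2 * q / N : ℝ) : ℂ)) := by
    have : Continuous τ := by fun_prop
    simpa [τ] using (this.tendsto 0).mono_left nhdsWithin_le_nhds
  have limits_eq : √(2 * q / N) * (quadraticGaussSum (-N) (4 * q) / (4 * q)) =
      √2 / (1 + I) * (quadraticGaussSum q N / N) := by
    refine tendsto_nhds_unique (tendsto_jacobiTheta_neg_one_div_add_mul_I q N) <|
      ((tendsto_inv_cpow_half_mul_neg_I_mul_cpow_half (by positivity) τ_tendsto).mul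
        (tendsto_jacobiTheta_add_mul_I q N)).congr' ?_
    filter_upwards [self_mem_nhdsWithin] with t ht
    have im_τ : (2 * q / N + t * I : ℂ).im = t := by
      rw [show (2 * q / N + t * I : ℂ) = ((2 * q / N : ℝ) : ℂ) + t * I by push_cast; rfl]
      simp only [add_im, ofReal_im, im_ofReal_mul, I_im, mul_one, zero_add]
    rw [jacobiTheta_neg_one_div (im_τ.symm ▸ ht)]
    ring
  have sqrt_eq : (√(2 * q / N) : ℂ) * √N = √2 * √q := by
    rw [← ofReal_mul, ← ofReal_mul, ← Real.sqrt_mul (by positivity), div_mul_cancel₀ _ hN.ne',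
      Real.sqrt_mul zero_le_two]
  have sq_q : (√q : ℂ) ^ 2 = q := by rw [← ofReal_pow, Real.sq_sqrt hq.le, ofReal_natCast]
  have sq_N : (√N : ℂ) ^ 2 = N := by rw [← ofReal_pow, Real.sq_sqrt hN.le, ofReal_natCast]
  have one_add_I_ne := one_add_I_ne_zero
  have sqrt_two_ne : (√2 : ℂ) ≠ 0 := by simp
  have sqrt_q_ne : (√q : ℂ) ≠ 0 := by simp [hq.ne']
  have sqrt_N_ne : (√N : ℂ) ≠ 0 := by simp [hN.ne']
  rw [eq_div_of_mul_eq sqrt_N_ne sqrt_eq, ← sq_q, ← sq_N] at limits_eq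
  field_simp at limits_eq
  linear_combination -limits_eq

end LandsbergSchaar

lemma quadraticGaussSum_neg_natCast_four (N : ℕ) :
    quadraticGaussSum (-N) 4 = 2 * (1 + (-I) ^ N) := by
  have stdAddChar_neg_N : ZMod.stdAddChar (((-N : ℤ) : ZMod 4)) = (-I) ^ N := by
    rw [ZMod.stdAddChar_coe, ← exp_neg_pi_div_two_mul_I, ← Complex.exp_nat_mul]
    congr 1
    push_cast
    ring
  have sq_two : (2 : ZMod 4) ^ 2 = 0 := rfl
  have sq_three : (3 : ZMod 4) ^ 2 = 1 := rfl
  calc quadraticGaussSum (-N) 4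
      = ZMod.stdAddChar ((-N : ℤ) * 0 ^ 2 : ZMod 4) + ZMod.stdAddChar ((-N : ℤ) * 1 ^ 2 : ZMod 4) +
          ZMod.stdAddChar ((-N : ℤ) * 2 ^ 2 : ZMod 4) +
          ZMod.stdAddChar ((-N : ℤ) * 3 ^ 2 : ZMod 4) := Fin.sum_univ_four _
    _ = 2 * (1 + (-I) ^ N) := by
        rw [sq_two, sq_three, zero_pow two_ne_zero, one_pow, mul_zero, mul_one,
          AddChar.map_zero_eq_one, stdAddChar_neg_N]
        ring

theorem quadraticGaussSum_one (N : ℕ) [NeZero N] :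
    quadraticGaussSum 1 N = √N * (1 + I) * (1 + (-I) ^ N) / 2 := by
  have h := quadraticGaussSum_reciprocity 1 N
  simp only [mul_one, quadraticGaussSum_neg_natCast_four, Nat.cast_one, Real.sqrt_one,
    ofReal_one] at h
  linear_combination h / 4

/-- The Legendre symbol modulo `p` as a complex Dirichlet character. -/
noncomputable abbrev legendreChar (p : ℕ) [Fact p.Prime] : DirichletCharacter ℂ p :=
  (quadraticChar (ZMod p)).ringHomComp (Int.castRingHom ℂ)

section LegendreChar

variable {p : ℕ} [Fact p.Prime]

lemma card_filter_sq_eq (hp : p ≠ 2) (a : ZMod p) :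
    ((Finset.univ.filter fun x : ZMod p ↦ x ^ 2 = a).card : ℂ) = legendreChar p a + 1 := by
  have h := quadraticChar_card_sqrts ((ZMod.ringChar_zmod_n p).substr hp) a
  rw [Set.toFinset_ofPred] at h
  simpa using congrArg (Int.cast : ℤ → ℂ) h

lemma gaussSum_legendreChar_eq_quadraticGaussSum (hp : p ≠ 2) :
    gaussSum (legendreChar p) ZMod.stdAddChar = quadraticGaussSum 1 p := by
  have sum_stdAddChar : ∑ a : ZMod p, ZMod.stdAddChar a = 0 := by
    simpa using AddChar.sum_mulShift (1 : ZMod p) (ZMod.isPrimitive_stdAddChar p)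
  calc gaussSum (legendreChar p) ZMod.stdAddChar
      = ∑ a : ZMod p, (legendreChar p a + 1) * ZMod.stdAddChar a := by
        simp only [gaussSum, add_mul, one_mul, Finset.sum_add_distrib, sum_stdAddChar, add_zero]
    _ = ∑ a : ZMod p, ∑ x : ZMod p with x ^ 2 = a, ZMod.stdAddChar (x ^ 2) := by
        refine Finset.sum_congr rfl fun a _ ↦ ?_
        rw [← card_filter_sq_eq hp, ← nsmul_eq_mul, ← Finset.sum_const]
        refine Finset.sum_congr rfl fun x hx ↦ ?_
        rw [(Finset.mem_filter.1 hx).2]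
    _ = quadraticGaussSum 1 p := by
        simp [quadraticGaussSum, Finset.sum_fiberwise]

theorem gaussSum_legendreChar_of_mod_four_eq_one (hp : p % 4 = 1) :
    gaussSum (legendreChar p) ZMod.stdAddChar = √p := by
  rw [gaussSum_legendreChar_eq_quadraticGaussSum (by rintro rfl; norm_num at hp),
    quadraticGaussSum_one, neg_pow, I_pow_eq_pow_mod, hp, pow_one,
    (Nat.odd_iff.2 (Nat.odd_of_mod_four_eq_one hp)).neg_one_pow]
  linear_combination -(√p : ℂ) / 2 * I_sq

theorem gaussSum_legendreChar_of_mod_four_eq_three (hp : p % 4 = 3) :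
    gaussSum (legendreChar p) ZMod.stdAddChar = I * √p := by
  rw [gaussSum_legendreChar_eq_quadraticGaussSum (by rintro rfl; norm_num at hp),
    quadraticGaussSum_one, neg_pow, I_pow_eq_pow_mod, hp, I_pow_three,
    (Nat.odd_iff.2 (Nat.odd_of_mod_four_eq_three hp)).neg_one_pow]
  linear_combination (√p : ℂ) / 2 * I_sq

end LegendreChar

lemma legendreChar_intCast (p : ℕ) [Fact p.Prime] (n : ℤ) :
    legendreChar p n = ((legendreSym p n : ℤ) : ℂ) := rfl

lemma legendreChar_ne_one {p : ℕ} [Fact p.Prime] (hp : p ≠ 2) : legendreChar p ≠ 1 :=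
  (MulChar.ringHomComp_ne_one_iff Int.cast_injective).2 <|
    quadraticChar_ne_one ((ZMod.ringChar_zmod_n p).substr hp)

lemma legendreChar_inv (p : ℕ) [Fact p.Prime] : (legendreChar p)⁻¹ = legendreChar p :=
  ((quadraticChar_isQuadratic (ZMod p)).comp _).inv

lemma isPrimitive_of_prime_of_ne_one {R : Type*} [CommMonoidWithZero R] {p : ℕ} [hp : Fact p.Prime]
    {χ : DirichletCharacter R p} (hχ : χ ≠ 1) : χ.IsPrimitive := by
  rw [DirichletCharacter.isPrimitive_def]
  refine (hp.out.eq_one_or_self_of_dvd _ χ.conductor_dvd_level).resolve_left fun h ↦ hχ ?_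
  exact (χ.eq_one_iff_conductor_eq_one).2 h

lemma legendreChar_isPrimitive {p : ℕ} [Fact p.Prime] (hp : p ≠ 2) :
    (legendreChar p).IsPrimitive :=
  isPrimitive_of_prime_of_ne_one (legendreChar_ne_one hp)

lemma legendreChar_even {p : ℕ} [Fact p.Prime] (hp : p % 4 = 1) : (legendreChar p).Even := by
  have h := legendreSym.at_neg_one (p := p) (by rintro rfl; norm_num at hp)
  rw [ZMod.χ₄_nat_one_mod_four hp] at h
  simpa [legendreSym, DirichletCharacter.Even] using congrArg (Int.cast : ℤ → ℂ) h

lemma legendreChar_odd {p : ℕ} [Fact p.Prime] (hp : p % 4 = 3) : (legendreChar p).Odd := by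
  have h := legendreSym.at_neg_one (p := p) (by rintro rfl; norm_num at hp)
  rw [ZMod.χ₄_nat_three_mod_four hp] at h
  simpa [legendreSym, DirichletCharacter.Odd] using congrArg (Int.cast : ℤ → ℂ) h

lemma stdAddChar_three_sub_neg (k : ZMod 3) :
    ZMod.stdAddChar k - ZMod.stdAddChar (-k) = I * √3 * legendreChar 3 k := by
  have h := gaussSum_mulShift_of_isPrimitive ZMod.stdAddChar
    (legendreChar_isPrimitive (p := 3) (by norm_num)) k
  rw [gaussSum_legendreChar_of_mod_four_eq_three rfl, legendreChar_inv] at h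
  have expand : gaussSum (legendreChar 3) (ZMod.stdAddChar.mulShift k) =
      legendreChar 3 0 * ZMod.stdAddChar (k * 0) + legendreChar 3 1 * ZMod.stdAddChar (k * 1) +
        legendreChar 3 (-1) * ZMod.stdAddChar (k * -1) := Fin.sum_univ_three _
  rw [expand, MulChar.map_zero, MulChar.map_one, legendreChar_odd (p := 3) rfl, mul_one,
    mul_neg_one] at h
  linear_combination h

/-! ### The sawtooth as a zeta value -/

lemma re_lt_one_of_norm_le_one {z : ℂ} (hz : ‖z‖ ≤ 1) (hz1 : z ≠ 1) : z.re < 1 := by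
  refine ((re_le_norm z).trans hz).lt_of_ne fun hre ↦ hz1 ?_
  have h := sq_norm_sub_sq_re z
  rw [hre] at h
  have him : z.im = 0 := by nlinarith [norm_nonneg z, sq_nonneg z.im]
  exact Complex.ext hre him

/-- The series `∑_{n ≥ 1} zⁿ e^{-nt}` in closed form; its Mellin transform is `Γ(s) Liₛ(z)`. -/
noncomputable def polylogKernel (z : ℂ) (t : ℝ) : ℂ :=
  z * Real.exp (-t) / (1 - z * Real.exp (-t))

section PolylogKernel

variable {z : ℂ}

lemma norm_mul_exp_neg_le (hz : ‖z‖ ≤ 1) (t : ℝ) : ‖z * Real.exp (-t)‖ ≤ Real.exp (-t) := by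
  rw [norm_mul, norm_real, Real.norm_of_nonneg (Real.exp_nonneg _)]
  exact mul_le_of_le_one_left (Real.exp_nonneg _) hz

lemma re_one_sub_mul_exp_neg_pos (hz : ‖z‖ ≤ 1) (hz1 : z ≠ 1) {t : ℝ} (ht : 0 ≤ t) :
    0 < (1 - z * Real.exp (-t)).re := by
  have h1 : Real.exp (-t) ≤ 1 := Real.exp_le_one_iff.2 (neg_nonpos.2 ht)
  have h2 := mul_lt_mul_of_pos_right (re_lt_one_of_norm_le_one hz hz1) (Real.exp_pos (-t))
  rw [sub_re, one_re, re_mul_ofReal]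
  linarith

lemma tendsto_one_sub_mul_exp_neg (z : ℂ) :
    Tendsto (fun t : ℝ ↦ 1 - z * Real.exp (-t)) atTop (𝓝 1) := by
  have exp_tendsto : Tendsto (fun t : ℝ ↦ (Real.exp (-t) : ℂ)) atTop (𝓝 0) :=
    (continuous_ofReal.tendsto 0).comp Real.tendsto_exp_neg_atTop_nhds_zero
  simpa only [mul_zero, sub_zero] using (exp_tendsto.const_mul z).const_sub 1

lemma continuousAt_polylogKernel (hz : ‖z‖ ≤ 1) (hz1 : z ≠ 1) {t : ℝ} (ht : 0 ≤ t) :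
    ContinuousAt (polylogKernel z) t :=
  ContinuousAt.div (by fun_prop) (by fun_prop) fun h ↦ by
    exact (re_one_sub_mul_exp_neg_pos hz hz1 ht).ne' (by rw [h, zero_re])

lemma hasDerivAt_log_one_sub_mul_exp_neg (hz : ‖z‖ ≤ 1) (hz1 : z ≠ 1) {t : ℝ} (ht : 0 ≤ t) :
    HasDerivAt (fun t : ℝ ↦ log (1 - z * Real.exp (-t))) (polylogKernel z t) t := by
  have h : HasDerivAt (fun t : ℝ ↦ 1 - z * (Real.exp (-t) : ℂ)) (z * Real.exp (-t)) t := by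
    simpa using (((hasDerivAt_neg t).exp.ofReal_comp).const_mul z).const_sub 1
  exact h.clog_real (Or.inl (re_one_sub_mul_exp_neg_pos hz hz1 ht))

lemma polylogKernel_isBigO_atTop (hz : ‖z‖ ≤ 1) :
    polylogKernel z =O[atTop] fun t ↦ Real.exp (-1 * t) := by
  have numerator : (fun t : ℝ ↦ z * (Real.exp (-t) : ℂ)) =O[atTop] fun t ↦ Real.exp (-1 * t) :=
    .of_norm_le fun t ↦ by simpa using norm_mul_exp_neg_le hz t
  have denominator := ((tendsto_one_sub_mul_exp_neg z).inv₀ one_ne_zero).isBigO_one ℝ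
  simpa only [mul_one, ← div_eq_mul_inv] using! numerator.mul denominator

lemma polylogKernel_isBigO_zero (hz : ‖z‖ ≤ 1) (hz1 : z ≠ 1) :
    polylogKernel z =O[𝓝[>] 0] (· ^ (-(0 : ℝ))) := by
  simpa using ((continuousAt_polylogKernel hz hz1 le_rfl).tendsto.mono_left
    nhdsWithin_le_nhds).isBigO_one ℝ

lemma locallyIntegrableOn_polylogKernel (hz : ‖z‖ ≤ 1) (hz1 : z ≠ 1) :
    MeasureTheory.LocallyIntegrableOn (polylogKernel z) (Set.Ioi 0) :=
  ContinuousOn.locallyIntegrableOn (fun _ ht ↦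
    (continuousAt_polylogKernel hz hz1 (le_of_lt ht)).continuousWithinAt) measurableSet_Ioi

lemma differentiableAt_mellin_polylogKernel (hz : ‖z‖ ≤ 1) (hz1 : z ≠ 1) {s : ℂ}
    (hs : 0 < s.re) : DifferentiableAt ℂ (mellin (polylogKernel z)) s :=
  mellin_differentiableAt_of_isBigO_rpow_exp one_pos (locallyIntegrableOn_polylogKernel hz hz1)
    (polylogKernel_isBigO_atTop hz) (polylogKernel_isBigO_zero hz hz1) hs

lemma mellin_polylogKernel_one (hz : ‖z‖ ≤ 1) (hz1 : z ≠ 1) :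
    mellin (polylogKernel z) 1 = -log (1 - z) := by
  have integrable : MeasureTheory.IntegrableOn (polylogKernel z) (Set.Ioi 0) := by
    simpa [MellinConvergent] using mellinConvergent_of_isBigO_rpow_exp one_pos
      (locallyIntegrableOn_polylogKernel hz hz1) (polylogKernel_isBigO_atTop hz)
      (polylogKernel_isBigO_zero hz hz1) (s := 1) (by simp)
  have log_tendsto : Tendsto (fun t : ℝ ↦ log (1 - z * Real.exp (-t))) atTop (𝓝 0) := by
    simpa using (tendsto_one_sub_mul_exp_neg z).clog (by simp)
  have := MeasureTheory.integral_Ioi_of_hasDerivAt_of_tendsto'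
    (fun t ht ↦ hasDerivAt_log_one_sub_mul_exp_neg hz hz1 ht) integrable log_tendsto
  simpa [mellin] using! this

lemma hasSum_polylogKernel (hz : ‖z‖ ≤ 1) {t : ℝ} (ht : 0 < t) :
    HasSum (fun n : ℕ ↦ z ^ (n + 1) * Real.exp (-(n + 1 : ℝ) * t)) (polylogKernel z t) := by
  have norm_lt_one : ‖z * Real.exp (-t)‖ < 1 :=
    (norm_mul_exp_neg_le hz t).trans_lt (Real.exp_lt_one_iff.2 (neg_neg_of_pos ht))
  refine ((hasSum_geometric_of_norm_lt_one norm_lt_one).mul_left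
    (z * Real.exp (-t))).congr_fun fun n ↦ ?_
  rw [← pow_succ', mul_pow, ← ofReal_pow, ← Real.exp_nat_mul]
  push_cast
  ring_nf

lemma hasSum_mellin_polylogKernel (hz : ‖z‖ ≤ 1) {s : ℂ} (hs : 1 < s.re) :
    HasSum (fun n : ℕ ↦ Gamma s * z ^ (n + 1) / ((n + 1 : ℝ) : ℂ) ^ s)
      (mellin (polylogKernel z) s) := by
  refine hasSum_mellin (fun n ↦ .inr (by positivity)) (by linarith)
    (fun t ht ↦ hasSum_polylogKernel hz ht) ?_
  refine ((summable_nat_add_iff 1).2 (Real.summable_one_div_nat_rpow.2 hs)).of_nonneg_of_le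
    (fun n ↦ by positivity) fun n ↦ ?_
  push_cast
  gcongr
  exact norm_pow z (n + 1) ▸ pow_le_one₀ (norm_nonneg z) hz

end PolylogKernel

lemma eq_at_one_of_eqOn_one_lt_re {f g : ℂ → ℂ} (hf : ContinuousAt f 1) (hg : ContinuousAt g 1)
    (h : ∀ s : ℂ, 1 < s.re → f s = g s) : f 1 = g 1 := by
  have : (𝓝[{s | 1 < s.re}] (1 : ℂ)).NeBot := by
    rw [← mem_closure_iff_nhdsWithin_neBot, closure_setOfPred_lt_re]
    simp
  refine tendsto_nhds_unique_of_eventuallyEq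
    (l := 𝓝[{s | 1 < s.re}] 1) (hf.mono_left nhdsWithin_le_nhds)
    (hg.mono_left nhdsWithin_le_nhds) ?_
  filter_upwards [self_mem_nhdsWithin] with s hs using h s hs

lemma norm_exp_two_pi_I_mul (x : ℝ) : ‖cexp (2 * π * I * x)‖ = 1 := by
  rw [show (2 * π * I * x : ℂ) = ((2 * π * x : ℝ) : ℂ) * I by push_cast; ring,
    norm_exp_ofReal_mul_I]

lemma Gamma_mul_expZeta_eq_mellin (x : ℝ) {s : ℂ} (hs : 1 < s.re) :
    Gamma s * HurwitzZeta.expZeta x s = mellin (polylogKernel (cexp (2 * π * I * x))) s := by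
  have hs0 : s ≠ 0 := by rintro rfl; norm_num at hs
  have hasSum_nat := (HurwitzZeta.hasSum_expZeta_of_one_lt_re x hs).mul_left (Gamma s)
  have hasSum_succ := (hasSum_nat_add_iff' 1).2 hasSum_nat
  rw [Finset.sum_range_one, Nat.cast_zero, zero_cpow hs0, div_zero, mul_zero,
    sub_zero] at hasSum_succ
  refine hasSum_succ.unique <|
    (hasSum_mellin_polylogKernel (norm_exp_two_pi_I_mul x).le hs).congr_fun fun n ↦ ?_
  rw [← Complex.exp_nat_mul, mul_div_assoc]
  push_cast
  ring_nf

lemma exp_two_pi_I_mul_ne_one {x : ℝ} (hx : (x : UnitAddCircle) ≠ 0) :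
    cexp (2 * π * I * x) ≠ 1 := by
  rw [Ne, exp_eq_one_iff]
  rintro ⟨n, hn⟩
  have hxn : (x : ℂ) = n := mul_left_cancel₀ two_pi_I_ne_zero (hn.trans (mul_comm _ _))
  refine hx ((AddCircle.coe_eq_zero_iff 1).2 ⟨n, ?_⟩)
  rw [zsmul_one]
  exact_mod_cast hxn.symm

theorem expZeta_one {x : ℝ} (hx : (x : UnitAddCircle) ≠ 0) :
    HurwitzZeta.expZeta x 1 = -log (1 - cexp (2 * π * I * x)) := by
  have norm_le := (norm_exp_two_pi_I_mul x).le
  have ne_one := exp_two_pi_I_mul_ne_one hx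
  have Gamma_continuousAt : ContinuousAt Gamma 1 := by
    simpa using (differentiableAt_Gamma_nat_add_one 0).continuousAt
  have h := eq_at_one_of_eqOn_one_lt_re
    (Gamma_continuousAt.mul
      (HurwitzZeta.differentiable_expZeta_of_ne_zero hx 1).continuousAt)
    (differentiableAt_mellin_polylogKernel norm_le ne_one (by simp)).continuousAt
    fun s hs ↦ Gamma_mul_expZeta_eq_mellin x hs
  rwa [mellin_polylogKernel_one norm_le ne_one, Pi.mul_apply, Gamma_one, one_mul] at h

lemma one_sub_exp_two_pi_I_mul (x : ℝ) :
    1 - cexp (2 * π * I * x) =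
      ((2 * Real.sin (π * x) : ℝ) : ℂ) * cexp ((π * x - π / 2 : ℝ) * I) := by
  have exp_eq : cexp ((π * x - π / 2 : ℝ) * I) = -I * cexp (π * x * I) := by
    rw [show ((π * x - π / 2 : ℝ) : ℂ) * I = -π / 2 * I + π * x * I by push_cast; ring,
      Complex.exp_add, exp_neg_pi_div_two_mul_I]
  have exp_mul_exp : cexp (-(π * x) * I) * cexp (π * x * I) = 1 := by
    rw [← Complex.exp_add]
    simp
  rw [exp_eq, show (2 * π * I * x : ℂ) = π * x * I + π * x * I by ring, Complex.exp_add]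
  push_cast
  rw [Complex.sin]
  linear_combination -exp_mul_exp +
    (cexp (-(π * x) * I) * cexp (π * x * I) - cexp (π * x * I) * cexp (π * x * I)) * I_sq

lemma log_one_sub_exp_two_pi_I_mul {x : ℝ} (h0 : 0 < x) (h1 : x < 1) :
    log (1 - cexp (2 * π * I * x)) =
      Real.log (2 * Real.sin (π * x)) + (π * x - π / 2 : ℝ) * I := by
  have := Real.pi_pos
  have sin_pos : 0 < 2 * Real.sin (π * x) :=
    mul_pos two_pos (Real.sin_pos_of_pos_of_lt_pi (by positivity) (by nlinarith))
  rw [one_sub_exp_two_pi_I_mul, log_ofReal_mul sin_pos (Complex.exp_ne_zero _), log_exp]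
  all_goals
    simp only [im_ofReal_mul, I_im]
    nlinarith

theorem sinZeta_one {x : ℝ} (h0 : 0 < x) (h1 : x < 1) :
    HurwitzZeta.sinZeta x 1 = π * (1 / 2 - x) := by
  have coe_ne_zero {y : ℝ} (hy0 : 0 < y) (hy1 : y < 1) : (y : UnitAddCircle) ≠ 0 := by
    rw [Ne, AddCircle.coe_eq_zero_iff_of_mem_Ico (by simpa using ⟨hy0.le, hy1⟩)]
    exact hy0.ne'
  have neg_coe : -(x : UnitAddCircle) = ((1 - x : ℝ) : UnitAddCircle) := by
    rw [AddCircle.coe_sub, AddCircle.coe_period, zero_sub]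
  rw [HurwitzZeta.sinZeta_eq, neg_coe, expZeta_one (coe_ne_zero h0 h1),
    expZeta_one (coe_ne_zero (sub_pos.2 h1) (sub_lt_self 1 h0)),
    log_one_sub_exp_two_pi_I_mul h0 h1,
    log_one_sub_exp_two_pi_I_mul (sub_pos.2 h1) (sub_lt_self 1 h0),
    mul_sub, mul_one, Real.sin_pi_sub]
  field_simp
  push_cast
  ring

lemma toAddCircle_eq_coe {N : ℕ} [NeZero N] (j : ZMod N) :
    ZMod.toAddCircle j = ((j.val / N : ℝ) : UnitAddCircle) := by
  conv_lhs => rw [← ZMod.natCast_zmod_val j, ZMod.toAddCircle_natCast]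

section LValue

variable {N : ℕ} [NeZero N]

lemma LFunction_sum_mul {ι : Type*} [Fintype ι] (c : ι → ℂ) (f : ι → ZMod N → ℂ) (s : ℂ) :
    ZMod.LFunction (fun k ↦ ∑ i, c i * f i k) s = ∑ i, c i * ZMod.LFunction (f i) s := by
  simp only [ZMod.LFunction, Finset.sum_mul, Finset.mul_sum]
  rw [Finset.sum_comm]
  exact Finset.sum_congr rfl fun i _ ↦ Finset.sum_congr rfl fun k _ ↦ by ring

lemma LFunction_sub (f g : ZMod N → ℂ) (s : ℂ) :
    ZMod.LFunction (fun k ↦ f k - g k) s = ZMod.LFunction f s - ZMod.LFunction g s := by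
  simp only [ZMod.LFunction, sub_mul, Finset.sum_sub_distrib, mul_sub]

lemma LFunction_const_mul (c : ℂ) (f : ZMod N → ℂ) (s : ℂ) :
    ZMod.LFunction (fun k ↦ c * f k) s = c * ZMod.LFunction f s := by
  simpa using LFunction_sum_mul (fun _ : Unit ↦ c) (fun _ ↦ f) s

lemma LFunction_stdAddChar_sub_one {j : ZMod N} (hj : j ≠ 0) :
    ZMod.LFunction (fun k ↦ ZMod.stdAddChar (j * k) - ZMod.stdAddChar (-j * k)) 1 =
      2 * π * I * (1 / 2 - j.val / N) := by
  have hN : (0 : ℝ) < N := Nat.cast_pos.2 (Nat.pos_of_neZero N)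
  have sinZeta_eq : HurwitzZeta.sinZeta (ZMod.toAddCircle j) 1 = π * (1 / 2 - j.val / N) := by
    rw [toAddCircle_eq_coe, sinZeta_one (div_pos (Nat.cast_pos.2 (ZMod.val_pos.2 hj)) hN)
      ((div_lt_one hN).2 (Nat.cast_lt.2 j.val_lt))]
    push_cast
    rfl
  rw [LFunction_sub, ZMod.LFunction_stdAddChar_eq_expZeta _ _ (.inl hj),
    ZMod.LFunction_stdAddChar_eq_expZeta _ _ (.inl (neg_ne_zero.2 hj)), map_neg]
  rw [HurwitzZeta.sinZeta_eq, div_eq_iff (by simp)] at sinZeta_eq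
  rw [sinZeta_eq]
  ring

lemma LFunction_sum_stdAddChar_sub_one {ι : Type*} [Fintype ι] {c : ι → ℂ} {j : ι → ZMod N}
    (hcj : ∀ i, c i ≠ 0 → j i ≠ 0) :
    ZMod.LFunction
        (fun k ↦ ∑ i, c i * (ZMod.stdAddChar (j i * k) - ZMod.stdAddChar (-j i * k))) 1 =
      2 * π * I * ∑ i, c i * (1 / 2 - (j i).val / N) := by
  rw [LFunction_sum_mul, Finset.mul_sum]
  refine Finset.sum_congr rfl fun i _ ↦ ?_
  rcases eq_or_ne (c i) 0 with hc | hc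
  · simp [hc]
  · rw [LFunction_stdAddChar_sub_one (hcj i hc)]
    ring

end LValue

/-! ### Character sums over a third of a period -/

/-- The excess of a Dirichlet character modulo `N` over the first third of a period: the sum of
`χ(a)` over `0 ≤ a < N / 3`. -/
noncomputable def firstThirdSum {N : ℕ} [NeZero N] (χ : DirichletCharacter ℂ N) : ℂ :=
  ∑ a : ZMod N with 3 * a.val < N, χ a

lemma ne_zero_of_map_ne_zero {N : ℕ} {χ : DirichletCharacter ℂ N} (hχ1 : χ ≠ 1) {a : ZMod N}
    (ha : χ a ≠ 0) : a ≠ 0 := by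
  rintro rfl
  exact ha (χ.map_zero' fun hN ↦ hχ1 (χ.level_one' hN))

lemma ne_one_of_odd {N : ℕ} {χ : DirichletCharacter ℂ N} (hχ : χ.Odd) : χ ≠ 1 := by
  rintro rfl
  have h : (1 : DirichletCharacter ℂ N) (-1) = 1 := MulChar.one_apply isUnit_one.neg
  rw [hχ] at h
  norm_num at h

lemma inv_apply_neg_one {N : ℕ} (χ : DirichletCharacter ℂ N) : χ⁻¹ (-1) = χ (-1) := by
  rw [MulChar.inv_apply_eq_inv']
  rcases χ.even_or_odd with h | h <;> rw [h] <;> norm_num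

section ThirdSums

variable {N : ℕ} [NeZero N] {χ : DirichletCharacter ℂ N}

lemma sum_mul_val_eq_zero_of_even (hχ1 : χ ≠ 1) (hχ : χ.Even) :
    ∑ a, χ a * (a.val : ℂ) = 0 := by
  have reflect : ∑ a, χ a * (a.val : ℂ) = ∑ a, χ a * (N - a.val : ℂ) := by
    rw [← Equiv.sum_comp (Equiv.neg (ZMod N))]
    refine Finset.sum_congr rfl fun a _ ↦ ?_
    rw [Equiv.neg_apply, hχ.eval_neg]
    by_cases ha : χ a = 0
    · simp only [ha, zero_mul]
    · rw [ZMod.neg_val, if_neg (ne_zero_of_map_ne_zero hχ1 ha), Nat.cast_sub a.val_lt.le]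
  simp only [mul_sub, Finset.sum_sub_distrib, ← Finset.sum_mul, MulChar.sum_eq_zero_of_ne_one hχ1,
    zero_mul, zero_sub] at reflect
  exact self_eq_neg.1 reflect

lemma sum_last_third (hχ1 : χ ≠ 1) (h3 : ¬ 3 ∣ N) :
    ∑ a with 2 * N ≤ 3 * a.val, χ a = χ (-1) * firstThirdSum χ := by
  rw [firstThirdSum, Finset.mul_sum, Finset.sum_filter, Finset.sum_filter,
    ← Equiv.sum_comp (Equiv.neg (ZMod N))]
  refine Finset.sum_congr rfl fun a _ ↦ ?_
  rw [Equiv.neg_apply, ← neg_one_mul, map_mul]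
  by_cases ha : χ a = 0
  · simp only [ha, mul_zero, ite_self]
  · have ha_lt := a.val_lt
    rw [neg_one_mul, ZMod.neg_val, if_neg (ne_zero_of_map_ne_zero hχ1 ha)]
    exact if_congr (by omega) rfl rfl

lemma sum_mul_three_mul_val_div (hχ1 : χ ≠ 1) (h3 : ¬ 3 ∣ N) :
    ∑ a, χ a * ((3 * a.val / N : ℕ) : ℂ) = (χ (-1) - 1) * firstThirdSum χ := by
  have digit (a : ZMod N) : ((3 * a.val / N : ℕ) : ℂ) =
      1 + (if 2 * N ≤ 3 * a.val then 1 else 0) - (if 3 * a.val < N then 1 else 0) := by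
    have ha_lt := a.val_lt
    rcases lt_or_ge (3 * a.val) N with h | h
    · rw [Nat.div_eq_of_lt h, if_neg (by omega), if_pos h]
      norm_num
    rcases lt_or_ge (3 * a.val) (2 * N) with h' | h'
    · rw [Nat.div_eq_of_lt_le (k := 1) (by omega) (by omega), if_neg (by omega), if_neg (by omega)]
      norm_num
    · rw [Nat.div_eq_of_lt_le (k := 2) (by omega) (by omega), if_pos h', if_neg (by omega)]
      norm_num
  simp only [digit, mul_sub, mul_add, mul_ite, mul_one, mul_zero, Finset.sum_sub_distrib,
    Finset.sum_add_distrib, MulChar.sum_eq_zero_of_ne_one hχ1, ← Finset.sum_filter]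
  rw [sum_last_third hχ1 h3, firstThirdSum]
  ring

lemma three_sub_inv_mul_sum_mul_val (h3 : ¬ 3 ∣ N) (hχ : χ.Odd) :
    (3 - χ⁻¹ 3) * ∑ a, χ a * (a.val : ℂ) = -2 * N * firstThirdSum χ := by
  let u : (ZMod N)ˣ := ZMod.unitOfCoprime 3 ((Nat.Prime.coprime_iff_not_dvd Nat.prime_three).2 h3)
  have hu : (u : ZMod N) = 3 := by simp [u]
  have val_three_mul (a : ZMod N) : ((3 * a).val : ℂ) = 3 * a.val - N * (3 * a.val / N : ℕ) := by
    have val_eq : (3 * a).val = 3 * a.val % N := by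
      rw [← ZMod.val_natCast, Nat.cast_mul, ZMod.natCast_zmod_val, Nat.cast_ofNat]
    rw [val_eq, eq_sub_iff_add_eq]
    exact_mod_cast Nat.mod_add_div _ _
  have inv_mul : χ⁻¹ 3 * χ 3 = 1 := by
    rw [← MulChar.mul_apply, inv_mul_cancel, ← hu, MulChar.one_apply_coe]
  have reindex : ∑ a, χ a * (a.val : ℂ) = χ 3 * ∑ a, χ a * ((3 * a).val : ℂ) := by
    rw [← Equiv.sum_comp u.mulLeft, Finset.mul_sum]
    simp only [Units.mulLeft_apply, hu, map_mul, mul_assoc]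
  have expand : ∑ a, χ a * ((3 * a).val : ℂ) =
      3 * ∑ a, χ a * (a.val : ℂ) + 2 * N * firstThirdSum χ := by
    have digits := sum_mul_three_mul_val_div (ne_one_of_odd hχ) h3
    rw [hχ] at digits
    simp only [val_three_mul, mul_sub, Finset.sum_sub_distrib, mul_left_comm _ (3 : ℂ),
      mul_left_comm _ (N : ℂ), ← Finset.mul_sum, digits]
    ring
  rw [expand] at reindex
  linear_combination -χ⁻¹ 3 * reindex -
    (3 * ∑ a, χ a * (a.val : ℂ) + 2 * N * firstThirdSum χ) * inv_mul

end ThirdSums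

section PrimitiveCharacter

variable {N : ℕ} [NeZero N] {χ : DirichletCharacter ℂ N}

lemma sum_mul_stdAddChar_mul (hprim : χ.IsPrimitive) (k : ZMod N) :
    ∑ a, χ a * ZMod.stdAddChar (a * k) = χ⁻¹ k * gaussSum χ ZMod.stdAddChar := by
  simpa only [gaussSum, AddChar.mulShift_apply, mul_comm k] using
    gaussSum_mulShift_of_isPrimitive ZMod.stdAddChar hprim k

lemma sum_mul_stdAddChar_neg_mul (hprim : χ.IsPrimitive) (k : ZMod N) :
    ∑ a, χ a * ZMod.stdAddChar (-a * k) =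
      χ (-1) * χ⁻¹ k * gaussSum χ ZMod.stdAddChar := by
  simp only [neg_mul_comm, sum_mul_stdAddChar_mul hprim]
  rw [← neg_one_mul, map_mul, inv_apply_neg_one]

theorem gaussSum_mul_LFunction_inv_one_of_odd (hprim : χ.IsPrimitive) (hχ : χ.Odd) :
    gaussSum χ ZMod.stdAddChar * DirichletCharacter.LFunction χ⁻¹ 1 =
      -(π * I / N) * ∑ a, χ a * (a.val : ℂ) := by
  have hχ1 := ne_one_of_odd hχ
  have fourier (k : ZMod N) :
      ∑ a, χ a * (ZMod.stdAddChar (a * k) - ZMod.stdAddChar (-a * k)) =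
        2 * gaussSum χ ZMod.stdAddChar * χ⁻¹ k := by
    simp only [mul_sub, Finset.sum_sub_distrib, sum_mul_stdAddChar_mul hprim,
      sum_mul_stdAddChar_neg_mul hprim]
    rw [hχ]
    ring
  have h := LFunction_sum_stdAddChar_sub_one (c := χ) (j := id)
    fun _ ha ↦ ne_zero_of_map_ne_zero hχ1 ha
  simp only [id, fourier, LFunction_const_mul] at h
  have sawtooth : ∑ a, χ a * (1 / 2 - a.val / N : ℂ) = -(∑ a, χ a * (a.val : ℂ)) / N := by
    simp only [mul_sub, Finset.sum_sub_distrib, ← Finset.sum_mul,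
      MulChar.sum_eq_zero_of_ne_one hχ1, zero_mul, zero_div, zero_sub, mul_div_assoc',
      ← Finset.sum_div, neg_div]
  rw [sawtooth] at h
  rw [DirichletCharacter.LFunction]
  linear_combination h / 2

theorem firstThirdSum_of_odd (h3 : ¬ 3 ∣ N) (hprim : χ.IsPrimitive) (hχ : χ.Odd) :
    2 * π * I * firstThirdSum χ = (3 - χ⁻¹ 3) * gaussSum χ ZMod.stdAddChar *
      DirichletCharacter.LFunction χ⁻¹ 1 := by
  have hN0 : (N : ℂ) ≠ 0 := NeZero.ne _
  have h := three_sub_inv_mul_sum_mul_val h3 hχ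
  rw [mul_assoc (3 - χ⁻¹ 3), gaussSum_mul_LFunction_inv_one_of_odd hprim hχ, mul_left_comm, h]
  field

lemma stdAddChar_three_mul_val_add (a : ZMod N) (n : ℤ) :
    ZMod.stdAddChar (((3 * a.val + N : ℕ) : ZMod (3 * N)) * (n : ZMod (3 * N))) =
      ZMod.stdAddChar (a * (n : ZMod N)) * ZMod.stdAddChar (n : ZMod 3) := by
  have hN0 : (N : ℂ) ≠ 0 := NeZero.ne _
  have cast_left : ((3 * a.val + N : ℕ) : ZMod (3 * N)) * (n : ZMod (3 * N)) =
      (((3 * a.val + N : ℕ) * n : ℤ) : ZMod (3 * N)) := by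
    push_cast
    rfl
  have cast_right : a * (n : ZMod N) = ((a.val * n : ℤ) : ZMod N) := by simp
  rw [cast_left, cast_right, ZMod.stdAddChar_coe, ZMod.stdAddChar_coe, ZMod.stdAddChar_coe,
    ← Complex.exp_add]
  congr 1
  push_cast
  field

lemma val_three_mul_val_add (a : ZMod N) :
    (((3 * a.val + N : ℕ) : ZMod (3 * N)).val : ℂ) =
      3 * a.val + N - if 2 * N ≤ 3 * a.val then 3 * N else 0 := by
  have ha := a.val_lt
  rw [ZMod.val_natCast]
  split_ifs with h
  · rw [Nat.mod_eq_sub_mod (by omega), Nat.mod_eq_of_lt (by omega), Nat.cast_sub (by omega)]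
    push_cast
    ring
  · rw [Nat.mod_eq_of_lt (by omega)]
    push_cast
    ring

lemma three_mul_val_add_ne_zero {N : ℕ} (h3 : ¬ 3 ∣ N) (a : ZMod N) :
    ((3 * a.val + N : ℕ) : ZMod (3 * N)) ≠ 0 := by
  rw [Ne, ZMod.natCast_eq_zero_iff]
  exact fun h ↦ h3 ((Nat.dvd_add_right (dvd_mul_right 3 _)).1 (dvd_of_mul_right_dvd h))

lemma sum_mul_stdAddChar_three_mul_val_add_sub (hprim : χ.IsPrimitive) (hχ : χ.Even) (n : ℤ) :
    ∑ a, χ a * (ZMod.stdAddChar (((3 * a.val + N : ℕ) : ZMod (3 * N)) * (n : ZMod (3 * N))) -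
        ZMod.stdAddChar (-((3 * a.val + N : ℕ) : ZMod (3 * N)) * (n : ZMod (3 * N)))) =
      I * √3 * gaussSum χ ZMod.stdAddChar * (legendreChar 3 n * χ⁻¹ n) := by
  have neg_cast : -(n : ZMod (3 * N)) = ((-n : ℤ) : ZMod (3 * N)) := by push_cast; rfl
  calc _ = (∑ a, χ a * ZMod.stdAddChar (a * (n : ZMod N))) * ZMod.stdAddChar (n : ZMod 3) -
        (∑ a, χ a * ZMod.stdAddChar (a * ((-n : ℤ) : ZMod N))) *
          ZMod.stdAddChar ((-n : ℤ) : ZMod 3) := by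
        simp only [neg_mul_comm, neg_cast, stdAddChar_three_mul_val_add, mul_sub,
          Finset.sum_sub_distrib, Finset.sum_mul, mul_assoc]
    _ = χ⁻¹ n * gaussSum χ ZMod.stdAddChar *
          (ZMod.stdAddChar (n : ZMod 3) - ZMod.stdAddChar (-n : ZMod 3)) := by
        rw [sum_mul_stdAddChar_mul hprim, sum_mul_stdAddChar_mul hprim]
        push_cast
        rw [← neg_one_mul (n : ZMod N), map_mul, inv_apply_neg_one, hχ]
        ring
    _ = _ := by
        rw [stdAddChar_three_sub_neg]
        ring

theorem firstThirdSum_of_even (h3 : ¬ 3 ∣ N) (hprim : χ.IsPrimitive) (hχ1 : χ ≠ 1)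
    (hχ : χ.Even) {ψ : DirichletCharacter ℂ (3 * N)}
    (hψ : ∀ n : ℤ, ψ n = legendreChar 3 n * χ⁻¹ n) :
    2 * π * I * firstThirdSum χ = I * √3 * gaussSum χ ZMod.stdAddChar *
      DirichletCharacter.LFunction ψ 1 := by
  have hN0 : (N : ℂ) ≠ 0 := NeZero.ne _
  let j (a : ZMod N) : ZMod (3 * N) := (3 * a.val + N : ℕ)
  have fourier (k : ZMod (3 * N)) :
      ∑ a, χ a * (ZMod.stdAddChar (j a * k) - ZMod.stdAddChar (-j a * k)) =
        I * √3 * gaussSum χ ZMod.stdAddChar * ψ k := by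
    obtain ⟨n, rfl⟩ := ZMod.intCast_surjective k
    rw [hψ, sum_mul_stdAddChar_three_mul_val_add_sub hprim hχ]
  have sawtooth : ∑ a, χ a * (1 / 2 - (j a).val / (3 * N : ℕ)) = firstThirdSum χ := by
    have term (a : ZMod N) : χ a * (1 / 2 - (j a).val / (3 * N : ℕ)) =
        χ a * (1 / 6) - χ a * a.val * (1 / N) + if 2 * N ≤ 3 * a.val then χ a else 0 := by
      rw [val_three_mul_val_add]
      push_cast
      split_ifs <;> field
    simp only [term, Finset.sum_add_distrib, Finset.sum_sub_distrib, ← Finset.sum_mul,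
      MulChar.sum_eq_zero_of_ne_one hχ1, sum_mul_val_eq_zero_of_even hχ1 hχ,
      ← Finset.sum_filter, sum_last_third hχ1 h3, zero_mul, sub_zero, zero_add]
    rw [hχ, one_mul]
  have h := LFunction_sum_stdAddChar_sub_one (c := χ) (j := j)
    fun a _ ↦ three_mul_val_add_ne_zero h3 a
  simp only [fourier, LFunction_const_mul] at h
  rw [sawtooth] at h
  exact h.symm

end PrimitiveCharacter

lemma firstThirdSum_eq_sum_range {N : ℕ} [NeZero N] {χ : DirichletCharacter ℂ N} (hχ1 : χ ≠ 1) :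
    firstThirdSum χ =
      ∑ n ∈ (Finset.range N).filter fun n : ℕ ↦ 0 < n ∧ (n : ℚ) < N / 3, χ (n : ℤ) := by
  have lt_div_three_iff (n : ℕ) : (n : ℚ) < N / 3 ↔ 3 * n < N := by
    rw [lt_div_iff₀' three_pos]
    exact_mod_cast Iff.rfl
  simp only [lt_div_three_iff]
  refine (Finset.sum_of_injOn (fun n : ℕ ↦ ((n : ℤ) : ZMod N)) ?_ ?_ ?_ fun _ _ ↦ rfl).symm
  · intro m hm n hn h
    simp only [Finset.coe_filter, Finset.mem_range, Set.mem_ofPred_eq] at hm hn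
    simpa [ZMod.natCast_eq_natCast_iff', Nat.mod_eq_of_lt hm.1, Nat.mod_eq_of_lt hn.1] using h
  · intro n hn
    simp only [Finset.coe_filter, Finset.mem_range, Set.mem_ofPred_eq] at hn
    simpa [ZMod.val_natCast, Nat.mod_eq_of_lt hn.1] using hn.2.2
  · intro a ha hmem
    by_contra hχa
    refine hmem ⟨a.val, ?_, by simp⟩
    have ha0 := ne_zero_of_map_ne_zero hχ1 hχa
    simpa [a.val_lt, ZMod.val_pos, ha0] using ha

lemma firstThirdSum_legendreChar {p : ℕ} [Fact p.Prime] (hp : p ≠ 2) :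
    firstThirdSum (legendreChar p) =
      ((∑ n ∈ (Finset.range p).filter fun n : ℕ ↦ 0 < n ∧ (n : ℚ) < p / 3,
        legendreSym p n : ℤ) : ℂ) := by
  rw [firstThirdSum_eq_sum_range (legendreChar_ne_one hp), Int.cast_sum]
  simp only [legendreChar_intCast]

/-- Theorem 7.4: let `p > 3` be prime and let `χ` be the Dirichlet character of modulus `3p`
with `χ(n) = χ₃(n) χ_p(n)` for all integers `n` (`χ₃` the Legendre symbol mod 3). Then:
(i) if `p ≡ 1 mod 4`, `∑_{0<n<p/3} χ_p(n) = (√(3p)/(2π)) L(1, χ)`;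
(ii) if `p ≡ 3 mod 4`, `∑_{0<n<p/3} χ_p(n) = (√p/(2π)) (3 - χ_p(3)) L(1, χ̃_p)`. -/
theorem quadratic_excess_third_eq (p : ℕ) [hp : Fact p.Prime] (hp3 : 3 < p)
    (χ : DirichletCharacter ℂ (3 * p))
    (hχ : ∀ n : ℤ, χ ((n : ZMod (3 * p)))
        = ((@legendreSym 3 ⟨by norm_num⟩ n : ℤ) : ℂ) * ((legendreSym p n : ℤ) : ℂ)) :
    (p % 4 = 1 →
      (((∑ n ∈ (Finset.range p).filter (fun n : ℕ => 0 < n ∧ (n : ℚ) < (p : ℚ) / 3),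
          legendreSym p (n : ℤ) : ℤ)) : ℂ)
        = ((Real.sqrt (3 * (p : ℝ)) / (2 * Real.pi) : ℝ) : ℂ) *
            @DirichletCharacter.LFunction (3 * p)
              ⟨mul_ne_zero (by norm_num) hp.out.ne_zero⟩ χ 1) ∧
    (p % 4 = 3 →
      (((∑ n ∈ (Finset.range p).filter (fun n : ℕ => 0 < n ∧ (n : ℚ) < (p : ℚ) / 3),
          legendreSym p (n : ℤ) : ℤ)) : ℂ)
        = ((Real.sqrt p / (2 * Real.pi) : ℝ) : ℂ) * ((3 : ℂ) - ((legendreSym p 3 : ℤ) : ℂ)) *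
            DirichletCharacter.LFunction
              ((quadraticChar (ZMod p)).ringHomComp (Int.castRingHom ℂ)) 1) := by
  have h3 : ¬ 3 ∣ p := fun h ↦ hp3.ne ((Nat.prime_dvd_prime_iff_eq Nat.prime_three hp.out).1 h)
  have hp2 : p ≠ 2 := by omega
  have hprim := legendreChar_isPrimitive hp2
  rw [← firstThirdSum_legendreChar hp2]
  refine ⟨fun hp4 ↦ mul_left_cancel₀ two_pi_I_ne_zero ?_,
    fun hp4 ↦ mul_left_cancel₀ two_pi_I_ne_zero ?_⟩
  · have hχ' (n : ℤ) : χ n = legendreChar 3 n * (legendreChar p)⁻¹ n := by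
      rw [legendreChar_inv]
      simpa only [legendreChar_intCast] using hχ n
    rw [firstThirdSum_of_even h3 hprim (legendreChar_ne_one hp2) (legendreChar_even hp4) hχ',
      gaussSum_legendreChar_of_mod_four_eq_one hp4, Real.sqrt_mul zero_le_three]
    push_cast
    field
  · have map_three : legendreChar p 3 = ((legendreSym p 3 : ℤ) : ℂ) := by
      simpa only [Int.cast_ofNat] using legendreChar_intCast p 3
    rw [firstThirdSum_of_odd h3 hprim (legendreChar_odd hp4), legendreChar_inv, map_three,
      gaussSum_legendreChar_of_mod_four_eq_three hp4]
    push_cast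
    field
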